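/- Fix α ∈ (0,1) and σ ∈ [9/10, 1]. There exist constants M_α ≥ 1 and K_α > 0 such that for every real M ≥ M_α, every integer k with 1 ≤ k ≤ log M, and every real H with M^σ ≤ H ≤ M, one has ∑_{m ∈ [M, M+H], m ∈ Γ_α(M)} τ_k(m) ≤ K_α · H · exp(20 · k^{1/σ²} · log log M). -/

import Mathlib

open Finset

/-- The `k`-fold divisor function `τ_k(n)`: the number of `k`-tuples
`(a_1, …, a_k)` of positive integers with `a_1 ⋯ a_k = n`. -/
def tauk (k n : ℕ) : ℕ :=
  ((Fintype.piFinset fun _ : Fin k => Finset.Icc 1 n).filter fun f => ∏ i, f i = n).card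

/-- `Ω(n)`: the number of prime factors of `n` counted with multiplicity. -/
def bigOmega (n : ℕ) : ℕ := n.primeFactorsList.length

def TT (k : ℕ) : ArithmeticFunction ℕ := ArithmeticFunction.zeta ^ k

lemma TT_mult (k : ℕ) : (TT k).IsMultiplicative := by
  induction k with
  | zero => simp [TT]
  | succ k ih => 
    have : TT (k+1) = TT k * ArithmeticFunction.zeta := by simp [TT, pow_succ]
    rw [this]
    exact ih.mul ArithmeticFunction.isMultiplicative_zeta

lemma TT_succ (k n : ℕ) : TT (k+1) n = ∑ d ∈ n.divisors, TT k d := by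
  have : TT (k+1) = ArithmeticFunction.zeta * TT k := by simp [TT, pow_succ']
  rw [this, ArithmeticFunction.zeta_mul_apply]

lemma TT_pp (k : ℕ) {p : ℕ} (hp : p.Prime) (a : ℕ) : TT k (p ^ a) = Nat.multichoose k a := by
  induction k generalizing a with
  | zero => 
    cases a with
    | zero => simp [TT]
    | succ a => 
      have : p ^ (a+1) ≠ 1 := (Nat.one_lt_pow (by omega) hp.one_lt).ne'
      simp [TT, ArithmeticFunction.one_apply_ne this]
  | succ k ih =>
    rw [TT_succ, Nat.sum_divisors_prime_pow hp]
    simp only [ih]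
    induction a with
    | zero => simp
    | succ a iha => rw [Finset.sum_range_succ, iha, Nat.multichoose_succ_succ, add_comm]

lemma mc_le (k a : ℕ) : Nat.multichoose k a ≤ (a+1)^k := by
  induction k generalizing a with
  | zero => cases a <;> simp
  | succ k ih =>
    induction a with
    | zero => simp
    | succ a iha =>
      rw [Nat.multichoose_succ_succ]
      have h1 := ih (a+1)
      have h2 : (a+1)^k ≤ (a+1+1)^k := Nat.pow_le_pow_left (by omega) k
      calc _ ≤ (a+1+1)^k + (a+1)^(k+1) := add_le_add h1 iha
        _ ≤ (a+1+1)^k + (a+1+1)^k * (a+1) := by rw [pow_succ (a+1)]; gcongr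
        _ = _ := by ring

lemma mc_ratio (k a : ℕ) (hk : 1 ≤ k) :
    (Nat.multichoose k (a+1) : ℝ) = Nat.multichoose k a * (((k:ℝ) + a) / (a+1)) := by
  have h : (k + a) * Nat.multichoose k a = Nat.multichoose k (a+1) * (a+1) := by
    rw [Nat.multichoose_eq, Nat.multichoose_eq]
    have := Nat.add_one_mul_choose_eq (k+a-1) a
    rw [show k + a - 1 + 1 = k + a by omega] at this
    exact this
  have h' : ((k:ℝ) + a) * Nat.multichoose k a = Nat.multichoose k (a+1) * (a+1) := by exact_mod_cast h
  field_simp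
  linarith

lemma mc_pow (k K a : ℕ) (hk : 1 ≤ k) (s : ℝ) (hs : 1 ≤ s) (hK : (k:ℝ)^s ≤ K) :
    (Nat.multichoose k a : ℝ)^s ≤ Nat.multichoose K a := by
  have hk' : (1:ℝ) ≤ k := by exact_mod_cast hk
  have hK1 : 1 ≤ K := by
    have : (1:ℝ) ≤ (k:ℝ)^s := Real.one_le_rpow hk' (by linarith)
    exact_mod_cast this.trans hK
  induction a with
  | zero => simp
  | succ a ih =>
    rw [mc_ratio k a hk, mc_ratio K a hK1, Real.mul_rpow (by positivity) (by positivity)]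
    have hc := (convexOn_rpow hs).2 (show (k:ℝ) ∈ Set.Ici 0 by simp) (show (1:ℝ) ∈ Set.Ici 0 by simp)
      (show (0:ℝ) ≤ 1/((a:ℝ)+1) by positivity) (show (0:ℝ) ≤ a/((a:ℝ)+1) by positivity)
      (by field_simp; ring)
    simp only [smul_eq_mul, Real.one_rpow, mul_one] at hc
    have e : ((k:ℝ) + a) / (a+1) = 1/((a:ℝ)+1) * k + a/((a:ℝ)+1) := by field_simp
    have e2 : ((K:ℝ) + a) / (a+1) = 1/((a:ℝ)+1) * K + a/((a:ℝ)+1) := by field_simp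
    have : (((k:ℝ) + a) / (a+1))^s ≤ ((K:ℝ) + a) / (a+1) := by
      rw [e, e2]
      refine hc.trans ?_
      gcongr
    gcongr

lemma knap {ι : Type*} [DecidableEq ι] (S : Finset ι) (w f : ι → ℝ) (F : ℝ) (hF0 : 0 ≤ F)
    (hw : ∀ i ∈ S, 0 < w i) (hf : ∀ i ∈ S, 0 ≤ f i) (hF : ∀ i ∈ S, f i ≤ F)
    (c : ℝ) (hc : 0 ≤ c) (hcw : c ≤ ∑ i ∈ S, w i) :
    ∃ T ⊆ S, ∑ i ∈ T, w i ≤ c ∧ c * ∑ i ∈ S, f i ≤ (∑ i ∈ T, f i + F) * ∑ i ∈ S, w i := by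
  induction S using Finset.strongInduction with
  | H S ih =>
    rcases S.eq_empty_or_nonempty with rfl | hne
    · exact ⟨∅, by simp, by simpa using hc, by simp⟩
    obtain ⟨q, hq, hqle⟩ := Finset.exists_le_of_sum_le (s := S) hne
      (f := fun i => f i * ∑ j ∈ S, w j) (g := fun i => w i * ∑ j ∈ S, f j)
      (by rw [← Finset.sum_mul, ← Finset.sum_mul, mul_comm])
    have hwS := Finset.add_sum_erase S w hq
    have hfS := Finset.add_sum_erase S f hq
    have hW0 : 0 ≤ ∑ i ∈ S.erase q, w i :=
      Finset.sum_nonneg fun i hi => (hw i (Finset.mem_of_mem_erase hi)).le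
    have hf0 : 0 ≤ ∑ i ∈ S.erase q, f i :=
      Finset.sum_nonneg fun i hi => (hf i (Finset.mem_of_mem_erase hi))
    have hwq := hw q hq
    have hfq := hf q hq
    have hFq := hF q hq
    rw [← hwS] at hcw hqle
    rw [← hfS] at hqle
    rw [← hwS, ← hfS]
    set W := ∑ i ∈ S.erase q, w i
    set G := ∑ i ∈ S.erase q, f i
    by_cases h : c ≤ W
    · obtain ⟨T, hT, h1, h2⟩ := ih (S.erase q) (Finset.erase_ssubset hq)
        (fun i hi => hw i (Finset.mem_of_mem_erase hi))
        (fun i hi => hf i (Finset.mem_of_mem_erase hi))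
        (fun i hi => hF i (Finset.mem_of_mem_erase hi)) h
      refine ⟨T, hT.trans (Finset.erase_subset _ _), h1, ?_⟩
      change c * G ≤ _ * W at h2
      have hT0 : 0 ≤ ∑ i ∈ T, f i :=
        Finset.sum_nonneg fun i hi => hf i (Finset.mem_of_mem_erase (hT hi))
      set X := ∑ i ∈ T, f i + F with hX
      have hX0 : 0 ≤ X := by positivity
      rcases hW0.eq_or_lt with h0 | h0
      · have : c = 0 := le_antisymm (h0 ▸ h) hc
        rw [this, zero_mul]; positivity
      · -- f q * W ≤ w q * G
        have h3 : f q * W ≤ w q * G := by nlinarith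
        have : W * (c * (f q + G)) ≤ W * (X * (w q + W)) := by
          nlinarith [mul_le_mul_of_nonneg_left h3 hc, mul_le_mul_of_nonneg_left h2 hwq.le, mul_le_mul_of_nonneg_left h2 h0.le]
        exact le_of_mul_le_mul_left this h0
    · push Not at h
      refine ⟨S.erase q, Finset.erase_subset _ _, h.le, ?_⟩
      change _ ≤ (G + F) * _
      have : f q + G ≤ G + F := by linarith
      nlinarith [mul_le_mul_of_nonneg_left this hc, mul_le_mul_of_nonneg_left hcw (by linarith : 0 ≤ G + F)]

lemma tauk_eq_aux (k n : ℕ) : tauk k n = 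
    (Nat.finMulAntidiag k n).card + (if n = 0 then tauk k n else 0) := by
  split_ifs with h
  · simp [h]
  · rw [tauk, add_zero]
    congr 1
    ext f
    simp only [Finset.mem_filter, Fintype.mem_piFinset, Finset.mem_Icc, Nat.mem_finMulAntidiag]
    constructor
    · rintro ⟨_, h2⟩; exact ⟨h2, h⟩
    · rintro ⟨h2, _⟩
      refine ⟨fun i => ?_, h2⟩
      have hd : f i ∣ n := h2 ▸ Finset.dvd_prod_of_mem f (Finset.mem_univ i)
      have hn : 0 < n := Nat.pos_of_ne_zero h
      exact ⟨Nat.pos_of_dvd_of_pos hd hn, Nat.le_of_dvd hn hd⟩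

lemma card_fma_succ (k n : ℕ) (hn : n ≠ 0) : (Nat.finMulAntidiag (k+1) n).card =
    ∑ d ∈ n.divisors, (Nat.finMulAntidiag k d).card := by
  rw [Finset.card_eq_sum_card_fiberwise (f := fun g => ∏ i : Fin k, g i.succ) (t := n.divisors)]
  · refine Finset.sum_congr rfl fun d hd => ?_
    have hd' := Nat.dvd_of_mem_divisors hd
    have hd0 : d ≠ 0 := ne_zero_of_dvd_ne_zero hn hd'
    refine Finset.card_nbij' (fun g => Fin.tail g) (fun g => Fin.cons (n / d) g) ?_ ?_ ?_ ?_
    · intro g hg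
      simp at hg
      simp [Fin.tail, hg.2, hd0]
    · intro g hg
      simp at hg
      simp [Fin.prod_univ_succ, hg.1, hn, Nat.div_mul_cancel hd']
    · intro g hg
      simp [Fin.prod_univ_succ] at hg
      obtain ⟨⟨h1, _⟩, h2⟩ := hg
      rw [h2] at h1
      have : n / d = g 0 := by rw [← h1]; exact Nat.mul_div_cancel _ (Nat.pos_of_ne_zero hd0)
      simp only [this]
      exact Fin.cons_self_tail g
    · intro g hg
      simp
  · intro g hg
    simp [Fin.prod_univ_succ] at hg
    simp only [Finset.mem_coe, Nat.mem_divisors]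
    exact ⟨hg.1 ▸ dvd_mul_left _ _, hn⟩

lemma tauk_eq (k n : ℕ) (hn : n ≠ 0) : tauk k n = TT k n := by
  rw [tauk_eq_aux, if_neg hn, add_zero]
  induction k generalizing n with
  | zero =>
    by_cases h : n = 1
    · subst h; simp [TT, Nat.finMulAntidiag_one]
    · simp [TT, Nat.finMulAntidiag_zero_left h, ArithmeticFunction.one_apply_ne h]
  | succ k ih =>
    rw [card_fma_succ k n hn, TT_succ]
    refine Finset.sum_congr rfl fun d hd => ih d ?_
    exact ne_zero_of_dvd_ne_zero hn (Nat.dvd_of_mem_divisors hd)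

lemma sum_tauk_div (K N : ℕ) :
    ∑ d ∈ Finset.Icc 1 N, (tauk K d : ℝ) / d ≤ (1 + Real.log N) ^ K := by
  have h1 : (∑ n ∈ Finset.Icc 1 N, (1:ℝ) / n) ≤ 1 + Real.log N := by
    have := harmonic_le_one_add_log N
    rw [harmonic_eq_sum_Icc] at this
    push_cast at this
    simpa using this
  have h2 : ∑ d ∈ Finset.Icc 1 N, (tauk K d : ℝ) / d ≤ (∑ n ∈ Finset.Icc 1 N, (1:ℝ) / n) ^ K := by
    have e : (∑ n ∈ Finset.Icc 1 N, (1:ℝ) / n) ^ K =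
        ∑ f ∈ Fintype.piFinset (fun _ : Fin K => Finset.Icc 1 N), ∏ i, (1:ℝ) / f i := by
      rw [← Finset.prod_univ_sum (fun _ : Fin K => Finset.Icc 1 N) (fun _ n => (1:ℝ) / n)]; simp
    rw [e]
    calc _ = ∑ d ∈ Finset.Icc 1 N, ∑ f ∈ (Fintype.piFinset (fun _ : Fin K => Finset.Icc 1 N)).filter (fun f => ∏ i, f i = d), ∏ i, (1:ℝ) / f i := by
            refine Finset.sum_congr rfl fun d hd => ?_
            rw [Finset.mem_Icc] at hd
            have : tauk K d = ((Fintype.piFinset (fun _ : Fin K => Finset.Icc 1 N)).filter (fun f => ∏ i, f i = d)).card := by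
              rw [tauk]
              congr 1
              ext f
              simp only [Finset.mem_filter, Fintype.mem_piFinset, Finset.mem_Icc]
              constructor
              · rintro ⟨h, h'⟩
                exact ⟨fun i => ⟨(h i).1, (h i).2.trans hd.2⟩, h'⟩
              · rintro ⟨h, h'⟩
                refine ⟨fun i => ⟨(h i).1, ?_⟩, h'⟩
                exact Nat.le_of_dvd hd.1 (h' ▸ Finset.dvd_prod_of_mem f (Finset.mem_univ i))
            rw [this, Finset.sum_congr rfl (g := fun _ => (1:ℝ)/d)]
            · rw [Finset.sum_const, nsmul_eq_mul]; ring
            · intro f hf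
              rw [← (Finset.mem_filter.1 hf).2]
              simp
      _ = ∑ f ∈ (Fintype.piFinset (fun _ : Fin K => Finset.Icc 1 N)).filter (fun f => ∏ i, f i ∈ Finset.Icc 1 N), ∏ i, (1:ℝ) / f i := by
            rw [← Finset.sum_fiberwise_of_maps_to (s := (Fintype.piFinset (fun _ : Fin K => Finset.Icc 1 N)).filter (fun f => ∏ i, f i ∈ Finset.Icc 1 N)) (t := Finset.Icc 1 N) (g := fun f => ∏ i, f i)]
            · refine Finset.sum_congr rfl fun d hd => ?_
              rw [Finset.filter_filter]
              refine Finset.sum_congr ?_ fun _ _ => rfl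
              refine Finset.filter_congr fun f _ => ?_
              constructor
              · intro h; exact ⟨h ▸ hd, h⟩
              · intro h; exact h.2
            · intro f hf; exact (Finset.mem_filter.1 hf).2
      _ ≤ _ := by
            refine Finset.sum_le_sum_of_subset_of_nonneg (Finset.filter_subset _ _) fun f _ _ => ?_
            positivity
  refine h2.trans (pow_le_pow_left₀ (Finset.sum_nonneg fun i _ => by positivity) h1 K)

lemma card_mult (M H : ℝ) (hM : 0 ≤ M) (hH : 0 ≤ H) (d : ℕ) (hd : 0 < d) :
    (((Finset.Icc ⌈M⌉₊ ⌊M + H⌋₊).filter (fun m => d ∣ m)).card : ℝ) ≤ H / d + 1 := by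
  have hd' : (0:ℝ) < d := by exact_mod_cast hd
  have h1 : ((Finset.Icc ⌈M⌉₊ ⌊M + H⌋₊).filter (fun m => d ∣ m)).card ≤
      (Finset.Icc ⌈M / d⌉₊ ⌊(M + H) / d⌋₊).card := by
    refine Finset.card_le_card_of_injOn (fun m => m / d) ?_ ?_
    · intro m hm
      simp only [Finset.coe_filter, Finset.mem_Icc, Set.mem_ofPred_eq] at hm
      obtain ⟨⟨h1, h2⟩, c, rfl⟩ := hm
      rw [Nat.ceil_le] at h1
      rw [Nat.le_floor_iff (by positivity)] at h2
      push_cast at h1 h2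
      simp only [Finset.coe_Icc, Set.mem_Icc]
      rw [Nat.mul_div_cancel_left _ hd, Nat.ceil_le, Nat.le_floor_iff (by positivity), div_le_iff₀ hd', le_div_iff₀ hd']
      constructor <;> linarith
    · intro m hm m' hm' h
      simp only [Finset.coe_filter, Finset.mem_Icc, Set.mem_ofPred_eq] at hm hm'
      exact (Nat.div_left_inj hm.2 hm'.2).1 h
  have h2 : ((Finset.Icc ⌈M / d⌉₊ ⌊(M + H) / d⌋₊).card : ℝ) ≤ H / d + 1 := by
    rw [Nat.card_Icc]
    rcases le_total ⌈M / d⌉₊ (⌊(M + H) / d⌋₊ + 1) with h | h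
    · rw [Nat.cast_sub h]
      push_cast
      have := Nat.floor_le (show 0 ≤ (M + H) / d by positivity)
      have := Nat.le_ceil (M / (d:ℝ))
      rw [add_div] at *
      linarith
    · rw [Nat.sub_eq_zero_of_le h]; push_cast; positivity
  exact (Nat.cast_le.2 h1).trans h2

lemma pointwise (m k K : ℕ) (hm : m ≠ 0) (hk : 1 ≤ k) (σ : ℝ) (hσ0 : 0 < σ) (hσ1 : σ ≤ 1)
    (hK : (k:ℝ) ^ (1/σ) ≤ K) (B : ℝ) (hB1 : 1 ≤ B)
    (hB : ∀ p ∈ m.primeFactors, (m.factorization p : ℝ) + 1 ≤ B) :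
    ∃ d : ℕ, 0 < d ∧ d ∣ m ∧ (d:ℝ) ≤ (m:ℝ) ^ σ ∧
      (tauk k m : ℝ) ≤ Real.exp (1/σ * (k * Real.log B)) * tauk K d := by
  classical
  have hs : 1 ≤ 1/σ := by rw [le_div_iff₀ hσ0]; linarith
  have hpos : ∀ a : ℕ, 0 < Nat.multichoose k a := by
    intro a
    rw [Nat.multichoose_eq]
    exact Nat.choose_pos (by omega)
  have hpr : ∀ p ∈ m.primeFactors, p.Prime := fun p hp => Nat.prime_of_mem_primeFactors hp
  set v : ℕ → ℕ := fun p => m.factorization p with hv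
  have hvpos : ∀ p ∈ m.primeFactors, 0 < v p := fun p hp =>
    (hpr p hp).factorization_pos_of_dvd hm (Nat.dvd_of_mem_primeFactors hp)
  have hmprod : ∏ p ∈ m.primeFactors, p ^ v p = m := Nat.prod_factorization_pow_eq_self hm
  have hprodT : ∀ T ⊆ m.primeFactors, ∀ j : ℕ, TT j (∏ p ∈ T, p ^ v p) =
      ∏ p ∈ T, Nat.multichoose j (v p) := by
    intro T hT j
    rw [(TT_mult j).map_prod]
    · exact Finset.prod_congr rfl fun p hp => TT_pp j (hpr p (hT hp)) _
    · intro p hp q hq hpq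
      exact Nat.Coprime.pow _ _ ((Nat.coprime_primes (hpr p (hT hp)) (hpr q (hT hq))).2 hpq)
  have hlog : ∀ T ⊆ m.primeFactors, Real.log ((∏ p ∈ T, p ^ v p : ℕ) : ℝ) =
      ∑ p ∈ T, (v p : ℝ) * Real.log p := by
    intro T hT
    push_cast
    rw [Real.log_prod]
    · exact Finset.sum_congr rfl fun p _ => Real.log_pow _ _
    · intro p hp
      have := (hpr p (hT hp)).ne_zero
      positivity
  have hlogT : ∀ T ⊆ m.primeFactors, Real.log ((TT k (∏ p ∈ T, p ^ v p) : ℕ) : ℝ) =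
      ∑ p ∈ T, Real.log (Nat.multichoose k (v p)) := by
    intro T hT
    rw [hprodT T hT]
    push_cast
    rw [Real.log_prod]
    intro p hp
    have := (hpos (v p)).ne'
    positivity
  have hlm : Real.log m = ∑ p ∈ m.primeFactors, (v p : ℝ) * Real.log p := by
    rw [← hlog _ subset_rfl, hmprod]
  have hlm0 : 0 ≤ Real.log m := Real.log_natCast_nonneg m
  obtain ⟨T, hT, h1, h2⟩ := knap m.primeFactors (fun p => (v p : ℝ) * Real.log p)
    (fun p => Real.log (Nat.multichoose k (v p))) (k * Real.log B)
    (by have := Real.log_nonneg hB1; positivity)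
    (by
      intro p hp
      have := hvpos p hp
      have : 0 < Real.log p := Real.log_pos (by exact_mod_cast (hpr p hp).one_lt)
      positivity)
    (by intro p hp; exact Real.log_natCast_nonneg _)
    (by
      intro p hp
      rw [← Real.log_pow]
      apply Real.log_le_log (by exact_mod_cast hpos _)
      calc ((Nat.multichoose k (v p) : ℕ) : ℝ) ≤ ((v p : ℝ) + 1)^k := by exact_mod_cast mc_le k (v p)
        _ ≤ B ^ k := pow_le_pow_left₀ (by positivity) (hB p hp) k)
    (σ * Real.log m) (by positivity) (by rw [← hlm]; nlinarith)
  set d := ∏ p ∈ T, p ^ v p with hd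
  have hd0 : 0 < d := Finset.prod_pos fun p hp => pow_pos (hpr p (hT hp)).pos _
  have hdm : d ∣ m := by
    conv_rhs => rw [← hmprod]
    exact Finset.prod_dvd_prod_of_subset _ _ _ hT
  have hmpos : (0:ℝ) < m := by positivity
  refine ⟨d, hd0, hdm, ?_, ?_⟩
  · rw [← Real.log_le_log_iff (by exact_mod_cast hd0) (by positivity), Real.log_rpow hmpos]
    rw [hd, hlog T hT]
    exact h1
  · rw [tauk_eq k m hm, tauk_eq K d hd0.ne']
    rw [← hlm, ← hlogT _ subset_rfl, hmprod, ← hlogT T hT, ← hd] at h2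
    have hTm : 0 < TT k m := by
      rw [← hmprod, hprodT _ subset_rfl]; exact Finset.prod_pos fun p _ => hpos _
    have hTd : 0 < TT k d := by
      rw [hd, hprodT _ hT]; exact Finset.prod_pos fun p _ => hpos _
    have hTd' : (0:ℝ) < TT k d := by exact_mod_cast hTd
    have hpow : ((TT k d : ℕ) : ℝ)^(1/σ) ≤ TT K d := by
      rw [hd, hprodT T hT, hprodT T hT]
      push_cast
      rw [← Real.finsetProd_rpow _ _ (fun p _ => by positivity)]
      exact Finset.prod_le_prod (fun p _ => by positivity) fun p _ => mc_pow k K (v p) hk _ hs hK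
    have hkey : σ * Real.log (TT k m) ≤ Real.log (TT k d) + k * Real.log B := by
      rcases hlm0.eq_or_lt with h0 | h0
      · have : m = 1 := by
          by_contra hne
          have : 1 < m := by omega
          have := Real.log_pos (show (1:ℝ) < m by exact_mod_cast this)
          linarith
        have e : TT k m = 1 := by rw [this]; exact (TT_mult k).1
        rw [e]
        simp only [Nat.cast_one, Real.log_one, mul_zero]
        have := Real.log_nonneg hB1
        have := Real.log_natCast_nonneg (TT k d)
        positivity
      · have : Real.log m * (σ * Real.log (TT k m)) ≤ Real.log m * (Real.log (TT k d) + k * Real.log B) := by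
          linarith
        exact le_of_mul_le_mul_left this h0
    have hkey2 : Real.log (TT k m) ≤ 1/σ * (k * Real.log B) + Real.log (TT k d) * (1/σ) := by
      have : 1/σ * (k * Real.log B) + Real.log (TT k d) * (1/σ) = (Real.log (TT k d) + k * Real.log B)/σ := by
        field_simp; ring
      rw [this, le_div_iff₀ hσ0]; linarith
    rw [Real.log_le_iff_le_exp (by exact_mod_cast hTm), Real.exp_add, ← Real.rpow_def_of_pos hTd'] at hkey2
    refine hkey2.trans ?_
    gcongr

theorem sum_tauk_regular_short_interval (α σ : ℝ) (hα0 : 0 < α) (hα1 : α < 1)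
    (hσ0 : 9 / 10 ≤ σ) (hσ1 : σ ≤ 1) :
    ∃ Mα Kα : ℝ, 1 ≤ Mα ∧ 0 < Kα ∧
      ∀ M : ℝ, Mα ≤ M → ∀ k : ℕ, 1 ≤ k → (k : ℝ) ≤ Real.log M →
      ∀ H : ℝ, M ^ σ ≤ H → H ≤ M →
        ∑ m ∈ (Finset.Icc ⌈M⌉₊ ⌊M + H⌋₊).filter
            (fun m => (bigOmega m : ℝ) ≤ Real.log M ^ α), (tauk k m : ℝ) ≤
          Kα * H * Real.exp (20 * (k : ℝ) ^ (1 / σ ^ 2) * Real.log (Real.log M)) := by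

  refine ⟨Real.exp 3, 3, Real.one_le_exp (by norm_num), by norm_num, ?_⟩
  intro M hM k hk _ H hH1 hH2
  have hσpos : 0 < σ := by linarith
  have hM0 : 0 < M := (Real.exp_pos 3).trans_le hM
  have hM1 : 1 ≤ M := (Real.one_le_exp (by norm_num)).trans hM
  set L := Real.log M with hL
  have hL3 : 3 ≤ L := (Real.le_log_iff_exp_le hM0).2 hM
  have hH0 : 0 < H := (Real.rpow_pos_of_pos hM0 σ).trans_le hH1
  have hl : 0 ≤ Real.log L := Real.log_nonneg (by linarith)
  have hkr : (1:ℝ) ≤ k := by exact_mod_cast hk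
  set s := 1 / σ with hs
  have hs1 : 1 ≤ s := by rw [hs, le_div_iff₀ hσpos]; linarith
  have hs2 : s ≤ 2 := by rw [hs, div_le_iff₀ hσpos]; linarith
  set Q := (k:ℝ) ^ (1 / σ^2) with hQ
  have hQs : (k:ℝ) ^ s ≤ Q := by
    apply Real.rpow_le_rpow_of_exponent_le hkr
    have : 1 / σ^2 = s * s := by rw [hs]; field_simp
    rw [this]; nlinarith
  have hks : (k:ℝ) ≤ (k:ℝ)^s := by
    conv_lhs => rw [← Real.rpow_one (k:ℝ)]
    exact Real.rpow_le_rpow_of_exponent_le hkr hs1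
  set K := ⌈(k:ℝ)^s⌉₊ with hK
  have hK1 : (k:ℝ)^s ≤ K := Nat.le_ceil _
  have hK2 : (K:ℝ) ≤ 2 * Q := by
    have := Nat.ceil_lt_add_one (show 0 ≤ (k:ℝ)^s by positivity)
    linarith
  set E := Real.exp (s * (k * Real.log (L^2))) with hE
  set N := ⌊2 * H⌋₊ with hN
  have hpt : ∀ m ∈ Finset.Icc ⌈M⌉₊ ⌊M + H⌋₊, (tauk k m : ℝ) ≤
      ∑ d ∈ (Finset.Icc 1 N).filter (fun d => d ∣ m), E * tauk K d := by
    intro m hm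
    rw [Finset.mem_Icc, Nat.ceil_le, Nat.le_floor_iff (by positivity)] at hm
    have hmpos : (0:ℝ) < m := hM0.trans_le hm.1
    have hm0 : m ≠ 0 := by rintro rfl; simp at hmpos
    have hm2 : (m:ℝ) ≤ 2 * M := by linarith [hm.2]
    obtain ⟨d, hd0, hdm, hdle, hle⟩ := pointwise m k K hm0 hk σ hσpos hσ1 hK1 (L^2)
      (by nlinarith) (by
        intro p hp
        have hpp := Nat.prime_of_mem_primeFactors hp
        have h1 : 2 ^ m.factorization p ≤ m :=
          (Nat.pow_le_pow_left hpp.two_le _).trans (Nat.le_of_dvd (Nat.pos_of_ne_zero hm0) (Nat.ordProj_dvd m p))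
        have h2 : (2:ℝ) ^ m.factorization p ≤ 2 * M := le_trans (by exact_mod_cast h1) hm2
        have h3 := Real.log_le_log (by positivity) h2
        rw [Real.log_pow, Real.log_mul (by norm_num) hM0.ne'] at h3
        have h4 := Real.log_two_gt_d9
        have h5 : ((m.factorization p : ℝ) - 1) * Real.log 2 ≤ L := by linarith
        have h6 : (m.factorization p : ℝ) - 1 ≤ 2 * L := by
          by_contra hcon
          push Not at hcon
          nlinarith
        nlinarith)
    refine hle.trans ?_
    refine Finset.single_le_sum (f := fun d => E * (tauk K d : ℝ)) (fun i _ => by positivity) ?_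
    rw [Finset.mem_filter, Finset.mem_Icc, Nat.le_floor_iff (by positivity)]
    refine ⟨⟨hd0, hdle.trans ?_⟩, hdm⟩
    calc (m:ℝ)^σ ≤ (2 * M)^σ := Real.rpow_le_rpow hmpos.le hm2 hσpos.le
      _ = 2^σ * M^σ := Real.mul_rpow (by norm_num) hM0.le
      _ ≤ 2 * H := by
        have : (2:ℝ)^σ ≤ 2 := by
          calc (2:ℝ)^σ ≤ 2^(1:ℝ) := Real.rpow_le_rpow_of_exponent_le (by norm_num) hσ1
            _ = 2 := Real.rpow_one 2
        gcongr
  have hlogN : 1 + Real.log N ≤ L^2 := by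
    have hNle : (N:ℝ) ≤ 2 * M := (Nat.floor_le (by positivity)).trans (by linarith)
    have : Real.log N ≤ Real.log (2 * M) := by
      rcases Nat.eq_zero_or_pos N with h | h
      · rw [h]; simp; exact Real.log_nonneg (by linarith)
      · exact Real.log_le_log (by exact_mod_cast h) hNle
    rw [Real.log_mul (by norm_num) hM0.ne'] at this
    have := Real.log_two_lt_d9
    nlinarith
  have hlogN0 : 0 ≤ 1 + Real.log N := by
    have := Real.log_natCast_nonneg N; linarith
  calc ∑ m ∈ (Finset.Icc ⌈M⌉₊ ⌊M + H⌋₊).filter (fun m => (bigOmega m : ℝ) ≤ L ^ α), (tauk k m : ℝ)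
      ≤ ∑ m ∈ Finset.Icc ⌈M⌉₊ ⌊M + H⌋₊, (tauk k m : ℝ) :=
        Finset.sum_le_sum_of_subset_of_nonneg (Finset.filter_subset _ _) fun _ _ _ => by positivity
    _ ≤ ∑ m ∈ Finset.Icc ⌈M⌉₊ ⌊M + H⌋₊, ∑ d ∈ (Finset.Icc 1 N).filter (fun d => d ∣ m), E * tauk K d :=
        Finset.sum_le_sum hpt
    _ = ∑ d ∈ Finset.Icc 1 N, ∑ m ∈ (Finset.Icc ⌈M⌉₊ ⌊M + H⌋₊).filter (fun m => d ∣ m), E * tauk K d := by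
        simp only [Finset.sum_filter]
        exact Finset.sum_comm
    _ ≤ ∑ d ∈ Finset.Icc 1 N, (3 * H * E) * ((tauk K d : ℝ) / d) := by
        refine Finset.sum_le_sum fun d hd => ?_
        rw [Finset.mem_Icc, Nat.le_floor_iff (by positivity)] at hd
        have hd0 : (0:ℝ) < d := by exact_mod_cast hd.1
        rw [Finset.sum_const, nsmul_eq_mul]
        have h1 := card_mult M H hM0.le hH0.le d hd.1
        have h2 : H / d + 1 ≤ 3 * H / d := by
          rw [div_add_one hd0.ne']
          gcongr
          linarith [hd.2]
        calc _ ≤ (3 * H / d) * (E * tauk K d) := by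
              apply mul_le_mul_of_nonneg_right (h1.trans h2); positivity
          _ = _ := by ring
    _ = (3 * H * E) * ∑ d ∈ Finset.Icc 1 N, (tauk K d : ℝ) / d := by rw [Finset.mul_sum]
    _ ≤ (3 * H * E) * (L^2)^K := by
        gcongr
        exact (sum_tauk_div K N).trans (pow_le_pow_left₀ hlogN0 hlogN K)
    _ = 3 * H * Real.exp (s * (k * Real.log (L^2)) + K * Real.log (L^2)) := by
        rw [Real.exp_add, ← hE, mul_comm (K:ℝ), ← Real.rpow_def_of_pos (by positivity), Real.rpow_natCast]
        ring
    _ ≤ 3 * H * Real.exp (20 * Q * Real.log L) := by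
        gcongr
        rw [Real.log_pow]
        push_cast
        have hkQ : (k:ℝ) ≤ Q := hks.trans hQs
        have h1 : s * k ≤ 2 * Q := mul_le_mul hs2 hkQ (by positivity) (by norm_num)
        have h2 := mul_le_mul_of_nonneg_right h1 hl
        have h3 := mul_le_mul_of_nonneg_right hK2 hl
        have h4 : 0 ≤ Q * Real.log L := by positivity
        nlinarith
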